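/- arXiv:1707.00826 — 3 statements merged into one kernel-verified Lean document; each statement's English description precedes it below -/
import Mathlib

section
/- Let u₁, u₂ be linearly independent vectors in the Euclidean plane ℝ² and let W = {a·u₁ + b·u₂ : a ≥ 0, b ≥ 0} be the closed convex cone (wedge) they generate. Then for every nonzero vector v ∈ ℝ² and every ε > 0, there exist points x, y ∈ ℝ² \ W with ‖x‖ < ε, ‖y‖ < ε, ⟨v, x⟩ > 0, and ⟨v, y⟩ < 0. -/
open scoped RealInnerProductSpace

/-!
If a cone `C` contained every point of the open half-space `{0 < f}` near the apex, it would contain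
the whole half-space, by scaling. A half-space spans the ambient space `E`, so if `C` is generated
by at most `dim E` vectors, these form a basis and `C` is the orthant of nonnegative coordinates.
When `2 ≤ dim E`, this orthant does not contain `{0 < f}`: lower one coordinate to `-1` and use
another one to correct the value of `f`. The two sides of the line are `f = ⟪v, ·⟫` and `-f`.
-/

open Filter Module Set Topology

section OrderedSemiring

variable {R E ι : Type*} [Semiring R] [PartialOrder R] [IsOrderedRing R]
  [AddCommMonoid E] [Module R E]

theorem mem_hull_pair {u₁ u₂ x : E} :
    x ∈ PointedCone.hull R {u₁, u₂} ↔ ∃ a b : R, 0 ≤ a ∧ 0 ≤ b ∧ x = a • u₁ + b • u₂ := by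
  simp only [Submodule.mem_span_pair, Subtype.exists, Nonneg.mk_smul, exists_prop, eq_comm (a := x),
    exists_and_left]

theorem repr_nonneg_of_mem_hull_range (b : Basis ι R E) {x : E}
    (hx : x ∈ PointedCone.hull R (range b)) (i : ι) : 0 ≤ b.repr x i := by
  classical
  induction hx using Submodule.span_induction with
  | mem x hx =>
    obtain ⟨j, rfl⟩ := hx
    rw [b.repr_self_apply]
    split_ifs <;> simp
  | zero => simp
  | add x y _ _ hx hy => simpa using add_nonneg hx hy
  | smul c x _ hx => simpa [← Nonneg.coe_smul] using mul_nonneg c.2 hx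

end OrderedSemiring

section LinearOrderedField

variable {K E ι : Type*} [Field K] [LinearOrder K] [IsStrictOrderedRing K]
  [AddCommGroup E] [Module K E] {f : E →ₗ[K] K}

theorem span_setOf_pos_eq_top (hf : f ≠ 0) : Submodule.span K {x | 0 < f x} = ⊤ := by
  refine Submodule.eq_top_iff'.2 fun x => ?_
  obtain ⟨e, he⟩ := LinearMap.surjective hf (|f x| + 1)
  have he_pos : 0 < f e := he ▸ by positivity
  have hxe_pos : 0 < f (x + e) := by
    rw [map_add, he]
    linarith [neg_abs_le (f x)]
  have hx : x + e - e ∈ Submodule.span K {x | 0 < f x} :=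
    sub_mem (Submodule.subset_span hxe_pos) (Submodule.subset_span he_pos)
  rwa [add_sub_cancel_right] at hx

theorem exists_pos_and_repr_neg [Nontrivial ι] (b : Basis ι K E) (hf : f ≠ 0) :
    ∃ x, 0 < f x ∧ ∃ i, b.repr x i < 0 := by
  obtain ⟨j, hj⟩ : ∃ j, f (b j) ≠ 0 := by
    contrapose! hf
    exact b.ext hf
  obtain ⟨i, hij⟩ := exists_ne j
  refine ⟨-b i + ((f (b i) + 1) / f (b j)) • b j, ?_, i, ?_⟩
  · simp [hj]
  · simp [hij]

theorem not_setOf_pos_subset_hull_range [Fintype ι] [Nontrivial ι] (u : ι → E)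
    (hcard : (Fintype.card ι : Cardinal) ≤ Module.rank K E) (hf : f ≠ 0) :
    ¬ {x | 0 < f x} ⊆ (PointedCone.hull K (range u) : Set E) := by
  intro hsub
  have hspan : ⊤ ≤ Submodule.span K (range u) := by
    rw [← span_setOf_pos_eq_top hf, Submodule.span_le]
    exact hsub.trans (PointedCone.hull_le_span K _)
  have : Module.Finite K E := .of_fg_top (top_le_iff.1 hspan ▸ Submodule.fg_span (finite_range u))
  have hind : LinearIndependent K u :=
    linearIndependent_of_top_le_span_of_card_le_finrank hspan <| by
      exact_mod_cast hcard.trans_eq (finrank_eq_rank K E).symm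
  let b := Basis.mk hind hspan
  obtain ⟨x, hx, i, hi⟩ := exists_pos_and_repr_neg b hf
  have hxb : x ∈ PointedCone.hull K (range b) := by
    rw [Basis.coe_mk]
    exact hsub hx
  exact hi.not_ge (repr_nonneg_of_mem_hull_range b hxb i)

theorem not_setOf_pos_subset_hull_pair (u₁ u₂ : E) (hrank : 2 ≤ Module.rank K E) (hf : f ≠ 0) :
    ¬ {x | 0 < f x} ⊆ (PointedCone.hull K {u₁, u₂} : Set E) := by
  rw [← Matrix.range_cons_cons_empty u₁ u₂ ![]]
  exact not_setOf_pos_subset_hull_range ![u₁, u₂] (by simpa using hrank) hf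

theorem frequently_notMem_and_pos [TopologicalSpace K] [OrderTopology K] [TopologicalSpace E]
    [ContinuousSMul K E] {C : PointedCone K E} (hC : ¬ {x | 0 < f x} ⊆ (C : Set E)) :
    ∃ᶠ x in 𝓝 0, x ∉ C ∧ 0 < f x := by
  obtain ⟨z, hz, hzC⟩ := not_subset.1 hC
  have hscale : Tendsto (fun t : K => t • z) (𝓝[>] 0) (𝓝 0) :=
    (Continuous.tendsto' (by fun_prop) 0 0 (zero_smul K z)).mono_left nhdsWithin_le_nhds
  refine hscale.frequently (Eventually.frequently ?_)
  filter_upwards [self_mem_nhdsWithin] with t (ht : 0 < t)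
  rw [C.smul_mem_iff ht, map_smul]
  exact ⟨hzC, smul_pos ht hz⟩

end LinearOrderedField

theorem exists_norm_lt_notMem_hull_pair_inner_pos {E : Type*} [NormedAddCommGroup E]
    [InnerProductSpace ℝ E] (hrank : 2 ≤ Module.rank ℝ E) (u₁ u₂ : E) {v : E} (hv : v ≠ 0)
    {ε : ℝ} (hε : 0 < ε) :
    ∃ x ∉ PointedCone.hull ℝ {u₁, u₂}, ‖x‖ < ε ∧ 0 < ⟪v, x⟫ := by
  have hf : innerₗ E v ≠ 0 := fun h => hv (inner_self_eq_zero.1 (LinearMap.congr_fun h v))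
  have hfreq := frequently_notMem_and_pos (not_setOf_pos_subset_hull_pair u₁ u₂ hrank hf)
  obtain ⟨x, ⟨hxC, hvx⟩, hx⟩ := (hfreq.and_eventually (Metric.ball_mem_nhds 0 hε)).exists
  exact ⟨x, hxC, mem_ball_zero_iff.1 hx, hvx⟩

theorem wedge_complement_both_sides_general {E : Type*} [NormedAddCommGroup E]
    [InnerProductSpace ℝ E] (hrank : 2 ≤ Module.rank ℝ E) (u₁ u₂ : E) (W : Set E)
    (hW : W = {w | ∃ a b : ℝ, 0 ≤ a ∧ 0 ≤ b ∧ w = a • u₁ + b • u₂}) :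
    ∀ v : E, v ≠ 0 → ∀ ε : ℝ, 0 < ε →
      ∃ x y : E, x ∉ W ∧ y ∉ W ∧ ‖x‖ < ε ∧ ‖y‖ < ε ∧ 0 < ⟪v, x⟫ ∧ ⟪v, y⟫ < 0 := by
  intro v hv ε hε
  have hW_hull : W = PointedCone.hull ℝ {u₁, u₂} := hW.trans (Set.ext fun _ => mem_hull_pair.symm)
  obtain ⟨x, hxW, hx, hvx⟩ := exists_norm_lt_notMem_hull_pair_inner_pos hrank u₁ u₂ hv hε
  obtain ⟨y, hyW, hy, hvy⟩ :=
    exists_norm_lt_notMem_hull_pair_inner_pos hrank u₁ u₂ (neg_ne_zero.2 hv) hε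
  rw [inner_neg_left, neg_pos] at hvy
  subst hW_hull
  exact ⟨x, y, hxW, hyW, hx, hy, hvx, hvy⟩

theorem wedge_complement_both_sides
    (u₁ u₂ : EuclideanSpace ℝ (Fin 2))
    (hind : LinearIndependent ℝ ![u₁, u₂])
    (W : Set (EuclideanSpace ℝ (Fin 2)))
    (hW : W = {w | ∃ a b : ℝ, 0 ≤ a ∧ 0 ≤ b ∧ w = a • u₁ + b • u₂}) :
    ∀ v : EuclideanSpace ℝ (Fin 2), v ≠ 0 → ∀ ε : ℝ, 0 < ε →
      ∃ x y : EuclideanSpace ℝ (Fin 2), x ∉ W ∧ y ∉ W ∧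
        ‖x‖ < ε ∧ ‖y‖ < ε ∧ 0 < ⟪v, x⟫ ∧ ⟪v, y⟫ < 0 :=
  wedge_complement_both_sides_general (by simp [← finrank_eq_rank]) u₁ u₂ W hW
end

section
/- Let n ≥ 1 be a natural number and r₁ > 1 a real number. In the Euclidean plane ℝ², let p = (0, r₁), p₁ = (sin(π/n), cos(π/n)), and p₂ = (−sin(π/n), cos(π/n)). Suppose q₁ and q₂ are points on the unit circle (‖q₁‖ = ‖q₂‖ = 1) such that q₁ is collinear with p and p₁ with q₁ ≠ p₁, and q₂ is collinear with p and p₂ with q₂ ≠ p₂. Then dist(q₁, q₂) ≤ (2π/n) · (r₁ + 1)/(r₁ − 1). -/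
open Real

/-!
Let `c` and `R` be the centre and the radius of the circle. Since `p₁` and `q₁`, as well as `p₂` and
`q₂`, have the power of `p` as the product of their distances to `p`, the triangles `p p₁ p₂` and
`p q₂ q₁` are similar, with ratio `|‖p - c‖² - R²| / (‖p - p₁‖ ‖p - p₂‖)`. Both factors in the
denominator are at least `|‖p - c‖ - R|`, and the chord `p₁ p₂` is no longer than its arc.
-/

section SecondIntersection

open EuclideanGeometry RealInnerProductSpace

variable {V P : Type*} [NormedAddCommGroup V] [InnerProductSpace ℝ V] [MetricSpace P]
  [NormedAddTorsor V P] {s : Sphere P} {p a b q q₁ q₂ : P}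

theorem inner_vsub_vsub_eq_power (ha : a ∈ s) (hq : q ∈ s) (hp : p ∈ line[ℝ, a, q]) :
    ⟪a -ᵥ p, q -ᵥ p⟫ = s.power p := by
  obtain ⟨t, rfl⟩ := mem_affineSpan_pair_iff_exists_lineMap_eq.1 hp
  rw [mem_sphere, dist_eq_norm_vsub V] at ha hq
  have hchord : ‖q -ᵥ a‖ ^ 2 + 2 * ⟪q -ᵥ a, a -ᵥ s.center⟫ = 0 := by
    rw [← vsub_add_vsub_cancel q a s.center] at hq
    have hexpand := norm_add_sq_real (q -ᵥ a) (a -ᵥ s.center)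
    rw [hq, ha] at hexpand
    linarith
  have hinner : ⟪a -ᵥ AffineMap.lineMap a q t, q -ᵥ AffineMap.lineMap a q t⟫ =
      t * (t - 1) * ‖q -ᵥ a‖ ^ 2 := by
    rw [AffineMap.left_vsub_lineMap, AffineMap.right_vsub_lineMap, ← neg_vsub_eq_vsub_rev q a,
      real_inner_smul_left, real_inner_smul_right, inner_neg_left, real_inner_self_eq_norm_sq]
    ring
  have hpower : s.power (AffineMap.lineMap a q t) =
      t ^ 2 * ‖q -ᵥ a‖ ^ 2 + 2 * t * ⟪q -ᵥ a, a -ᵥ s.center⟫ := by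
    rw [Sphere.power, dist_eq_norm_vsub V, AffineMap.lineMap_apply, vadd_vsub_assoc,
      norm_add_sq_real, ha, real_inner_smul_left, norm_smul, mul_pow, Real.norm_eq_abs, sq_abs]
    ring
  rw [hinner, hpower]
  linear_combination -t * hchord

theorem vsub_eq_power_div_smul_vsub (ha : a ∈ s) (hq : q ∈ s) (hp : p ∈ line[ℝ, a, q])
    (hap : a ≠ p) : q -ᵥ p = (s.power p / ‖a -ᵥ p‖ ^ 2) • (a -ᵥ p) := by
  have hq_line : q ∈ line[ℝ, p, a] :=
    (collinear_insert_of_mem_affineSpan_pair hp).mem_affineSpan_of_mem_of_ne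
      (by simp) (by simp) (by simp) hap.symm
  obtain ⟨t, rfl⟩ := mem_affineSpan_pair_iff_exists_lineMap_eq.1 hq_line
  have ht : s.power p = t * ‖a -ᵥ p‖ ^ 2 := by
    rw [← inner_vsub_vsub_eq_power ha hq hp, AffineMap.lineMap_vsub_left, real_inner_smul_right,
      real_inner_self_eq_norm_sq]
  have hap_norm : ‖a -ᵥ p‖ ≠ 0 := norm_ne_zero_iff.2 (vsub_ne_zero.2 hap)
  rw [AffineMap.lineMap_vsub_left, ht, mul_div_cancel_right₀ _ (pow_ne_zero 2 hap_norm)]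

theorem dist_eq_abs_power_div_mul_dist (ha : a ∈ s) (hb : b ∈ s) (hq₁ : q₁ ∈ s) (hq₂ : q₂ ∈ s)
    (hp₁ : p ∈ line[ℝ, a, q₁]) (hp₂ : p ∈ line[ℝ, b, q₂]) (hap : a ≠ p) (hbp : b ≠ p) :
    dist q₁ q₂ = |s.power p| / (dist a p * dist b p) * dist a b := by
  have hinv := dist_div_norm_sq_smul (vsub_ne_zero.2 hap) (vsub_ne_zero.2 hbp) 1
  calc
    dist q₁ q₂ = dist (q₁ -ᵥ p) (q₂ -ᵥ p) := (dist_vsub_cancel_right ..).symm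
    _ = dist (s.power p • (1 / ‖a -ᵥ p‖) ^ 2 • (a -ᵥ p))
          (s.power p • (1 / ‖b -ᵥ p‖) ^ 2 • (b -ᵥ p)) := by
      rw [vsub_eq_power_div_smul_vsub ha hq₁ hp₁ hap, vsub_eq_power_div_smul_vsub hb hq₂ hp₂ hbp]
      simp only [smul_smul, div_pow, one_pow, mul_one_div]
    _ = |s.power p| / (dist a p * dist b p) * dist a b := by
      rw [dist_smul₀, hinv, dist_vsub_cancel_right, Real.norm_eq_abs, ← dist_eq_norm_vsub,
        ← dist_eq_norm_vsub]
      ring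

theorem abs_dist_center_sub_radius_le_dist (ha : a ∈ s) :
    |dist p s.center - s.radius| ≤ dist a p := by
  simpa only [mem_sphere.1 ha, dist_comm a p] using abs_dist_sub_le p a s.center

theorem dist_le_div_mul_dist_of_mem_line (ha : a ∈ s) (hb : b ∈ s) (hq₁ : q₁ ∈ s) (hq₂ : q₂ ∈ s)
    (hp₁ : p ∈ line[ℝ, a, q₁]) (hp₂ : p ∈ line[ℝ, b, q₂]) (hp : p ∉ s) :
    dist q₁ q₂ ≤
      (dist p s.center + s.radius) / |dist p s.center - s.radius| * dist a b := by
  set d := dist p s.center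
  have hgap : 0 < |d - s.radius| := abs_pos.2 (sub_ne_zero.2 hp)
  have hsum : 0 ≤ d + s.radius := add_nonneg dist_nonneg (Sphere.radius_nonneg_of_mem ha)
  have hpower : |s.power p| = (d + s.radius) * |d - s.radius| := by
    rw [Sphere.power, sq_sub_sq, abs_mul, abs_of_nonneg hsum]
  calc
    dist q₁ q₂ = |s.power p| / (dist a p * dist b p) * dist a b :=
      dist_eq_abs_power_div_mul_dist ha hb hq₁ hq₂ hp₁ hp₂ (ne_of_mem_of_not_mem ha hp)
        (ne_of_mem_of_not_mem hb hp)
    _ ≤ |s.power p| / (|d - s.radius| * |d - s.radius|) * dist a b := by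
      gcongr <;> exact abs_dist_center_sub_radius_le_dist ‹_›
    _ = (d + s.radius) / |d - s.radius| * dist a b := by
      rw [hpower, mul_div_mul_right _ _ hgap.ne']

end SecondIntersection

theorem norm_sin_cos (α : ℝ) : ‖!₂[sin α, cos α]‖ = 1 := by
  simp [EuclideanSpace.norm_eq]

theorem dist_sin_cos_le (α β : ℝ) : dist !₂[sin α, cos α] !₂[sin β, cos β] ≤ |α - β| := by
  have hcos := one_sub_sq_div_two_le_cos (x := α - β)
  rw [cos_sub] at hcos
  rw [EuclideanSpace.dist_eq, ← sqrt_sq_eq_abs]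
  apply sqrt_le_sqrt
  simp only [Fin.sum_univ_two, Real.dist_eq, sq_abs, Matrix.cons_val_zero, Matrix.cons_val_one]
  linarith [sin_sq_add_cos_sq α, sin_sq_add_cos_sq β]

theorem second_intersections_dist_bound_general {α β : ℝ}
    {p p₁ p₂ q₁ q₂ : EuclideanSpace ℝ (Fin 2)} (hp : ‖p‖ ≠ 1)
    (hp₁ : p₁ = !₂[sin α, cos α]) (hp₂ : p₂ = !₂[sin β, cos β])
    (hq₁ : ‖q₁‖ = 1) (hq₂ : ‖q₂‖ = 1)
    (hcol₁ : Collinear ℝ {p, p₁, q₁}) (hne₁ : q₁ ≠ p₁)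
    (hcol₂ : Collinear ℝ {p, p₂, q₂}) (hne₂ : q₂ ≠ p₂) :
    dist q₁ q₂ ≤ |α - β| * ((‖p‖ + 1) / |‖p‖ - 1|) := by
  let s : EuclideanGeometry.Sphere (EuclideanSpace ℝ (Fin 2)) := ⟨0, 1⟩
  have mem_s (x : EuclideanSpace ℝ (Fin 2)) : x ∈ s ↔ ‖x‖ = 1 := by
    rw [EuclideanGeometry.mem_sphere, dist_zero_right]
  have hp₁s : p₁ ∈ s := (mem_s p₁).2 (hp₁ ▸ norm_sin_cos α)
  have hp₂s : p₂ ∈ s := (mem_s p₂).2 (hp₂ ▸ norm_sin_cos β)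
  have hline₁ : p ∈ line[ℝ, p₁, q₁] :=
    hcol₁.mem_affineSpan_of_mem_of_ne (by simp) (by simp) (by simp) hne₁.symm
  have hline₂ : p ∈ line[ℝ, p₂, q₂] :=
    hcol₂.mem_affineSpan_of_mem_of_ne (by simp) (by simp) (by simp) hne₂.symm
  calc
    dist q₁ q₂ ≤ (‖p‖ + 1) / |‖p‖ - 1| * dist p₁ p₂ := by
      simpa only [s, dist_zero_right] using dist_le_div_mul_dist_of_mem_line hp₁s hp₂s
        ((mem_s q₁).2 hq₁) ((mem_s q₂).2 hq₂) hline₁ hline₂ ((mem_s p).not.2 hp)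
    _ ≤ (‖p‖ + 1) / |‖p‖ - 1| * |α - β| := by
      rw [hp₁, hp₂]
      gcongr
      exact dist_sin_cos_le α β
    _ = |α - β| * ((‖p‖ + 1) / |‖p‖ - 1|) := mul_comm ..

theorem second_intersections_dist_bound
    (n : ℕ) (hn : 1 ≤ n) (r₁ : ℝ) (hr₁ : 1 < r₁)
    (p p₁ p₂ q₁ q₂ : EuclideanSpace ℝ (Fin 2))
    (hp : p = (WithLp.equiv 2 (Fin 2 → ℝ)).symm ![0, r₁])
    (hp₁ : p₁ = (WithLp.equiv 2 (Fin 2 → ℝ)).symm ![sin (π / n), cos (π / n)])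
    (hp₂ : p₂ = (WithLp.equiv 2 (Fin 2 → ℝ)).symm ![-sin (π / n), cos (π / n)])
    (hq₁ : ‖q₁‖ = 1) (hq₂ : ‖q₂‖ = 1)
    (hcol₁ : Collinear ℝ ({p, p₁, q₁} : Set (EuclideanSpace ℝ (Fin 2))))
    (hne₁ : q₁ ≠ p₁)
    (hcol₂ : Collinear ℝ ({p, p₂, q₂} : Set (EuclideanSpace ℝ (Fin 2))))
    (hne₂ : q₂ ≠ p₂) :
    dist q₁ q₂ ≤ 2 * π / n * ((r₁ + 1) / (r₁ - 1)) := by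
  have hp_norm : ‖p‖ = r₁ := by
    simp [hp, EuclideanSpace.norm_eq, sqrt_sq (zero_lt_one.trans hr₁).le]
  have hangle : |π / n - -(π / n)| = 2 * π / n := by
    rw [sub_neg_eq_add, abs_of_nonneg (by positivity)]
    ring
  have hbound := second_intersections_dist_bound_general (β := -(π / n)) (hp_norm.trans_ne hr₁.ne')
    hp₁ (by simp [hp₂]) hq₁ hq₂ hcol₁ hne₁ hcol₂ hne₂
  rwa [hangle, hp_norm, abs_of_pos (sub_pos.2 hr₁)] at hbound
end

section
/- Let n ≥ 7 be a natural number. In the Euclidean plane ℝ², let p = (0, 4), p₁ = (sin(π/n), cos(π/n)), and p₂ = (−sin(π/n), cos(π/n)). Suppose q₁ and q₂ are points on the unit circle (‖q₁‖ = ‖q₂‖ = 1) such that q₁ is collinear with p and p₁ with q₁ ≠ p₁, and q₂ is collinear with p and p₂ with q₂ ≠ p₂. Then the angle between q₁ and q₂ (the angle ∠(q₁, 0, q₂) at the origin) is strictly less than 4π/n. -/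
open Real

/-!
Fix a circle of radius `r` about the origin and a point `p` at distance `R > r`. If a secant through
`p` meets the circle at angles `θ` and `π - β` from `p`, then
`cos β = ((R² + r²) cos θ - 2Rr) / (R² + r² - 2Rr cos θ)`. This exceeds `cos 2θ` for acute `θ` as
soon as `R ≥ 3r`; the constant `3` is visible in the equivalent form
`tan (β / 2) = (R + r) / (R - r) * tan (θ / 2)`, whose factor is then at most `2`, while
`2 tan (θ / 2) < tan θ`. So each second intersection lies within `2θ` of the direction `-p`, and the
triangle inequality for angles combines the two secants.
-/

section Secant

open InnerProductGeometry
open EuclideanGeometry (Sphere mem_sphere)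
open scoped EuclideanGeometry RealInnerProductSpace

variable {V : Type*} [NormedAddCommGroup V] [InnerProductSpace ℝ V]

lemma eq_secondInter_of_collinear {P : Type*} [MetricSpace P] [NormedAddTorsor V P]
    {s : Sphere P} {p a q : P} (ha : a ∈ s) (hq : q ∈ s) (hpa : p ≠ a)
    (hcol : Collinear ℝ {p, a, q}) (hqa : q ≠ a) : q = s.secondInter a (p -ᵥ a) := by
  have hq_line : q ∈ line[ℝ, a, p] :=
    hcol.mem_affineSpan_of_mem_of_ne (by simp) (by simp) (by simp) hpa.symm
  exact ((Sphere.eq_or_eq_secondInter_iff_mem_of_mem_affineSpan_pair ha hq_line).2 hq).resolve_left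
    hqa

lemma inner_secondInter_mul_norm_sub_sq (p a : V) (r : ℝ) :
    ⟪Sphere.secondInter ⟨0, r⟩ a (p - a), p⟫ * ‖p - a‖ ^ 2 =
      2 * ‖p‖ ^ 2 * ‖a‖ ^ 2 - (‖p‖ ^ 2 + ‖a‖ ^ 2) * ⟪p, a⟫ := by
  rcases eq_or_ne p a with rfl | hpa
  · simp only [sub_self, norm_zero, real_inner_self_eq_norm_sq]
    ring
  · have hdist : ‖p - a‖ ≠ 0 := norm_ne_zero_iff.2 (sub_ne_zero.2 hpa)
    simp only [Sphere.secondInter, vsub_eq_sub, sub_zero, vadd_eq_add, inner_add_left,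
      real_inner_smul_left, real_inner_self_eq_norm_sq]
    field_simp
    simp only [norm_sub_sq_real, inner_sub_left, real_inner_self_eq_norm_sq, real_inner_comm p a]
    ring

lemma cos_angle_neg_mul_norm_sub_sq {p a q : V} (ha : a ≠ 0) (hp : p ≠ 0) (hpa : p ≠ a)
    (hq : ‖q‖ = ‖a‖) (hcol : Collinear ℝ {p, a, q}) (hqa : q ≠ a) :
    cos (angle q (-p)) * ‖p - a‖ ^ 2 =
      (‖p‖ ^ 2 + ‖a‖ ^ 2) * cos (angle p a) - 2 * ‖p‖ * ‖a‖ := by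
  have hq_eq : q = Sphere.secondInter ⟨0, ‖a‖⟩ a (p - a) :=
    eq_secondInter_of_collinear (by simp [mem_sphere]) (by simp [mem_sphere, hq]) hpa hcol hqa
  have hinner := inner_secondInter_mul_norm_sub_sq p a ‖a‖
  rw [← hq_eq] at hinner
  have hp' : ‖p‖ ≠ 0 := norm_ne_zero_iff.2 hp
  have ha' : ‖a‖ ≠ 0 := norm_ne_zero_iff.2 ha
  rw [cos_angle, cos_angle, inner_neg_right, norm_neg, hq]
  field_simp
  linear_combination -hinner

lemma two_mul_sq_sub_one_mul_lt {R r c : ℝ} (hr : 0 < r) (hR : 3 * r ≤ R) (hc₀ : -1 / 3 < c)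
    (hc₁ : c < 1) :
    (2 * c ^ 2 - 1) * (R ^ 2 - 2 * (R * r * c) + r ^ 2) <
      (R ^ 2 + r ^ 2) * c - 2 * R * r := by
  have hratio : 10 * (R * r) ≤ 3 * (R ^ 2 + r ^ 2) := by
    nlinarith [mul_nonneg (sub_nonneg.2 hR) (show 0 ≤ 3 * R - r by linarith)]
  have hRr : 0 < R * r := by nlinarith
  have hfactor : 0 < (R ^ 2 + r ^ 2) * (1 + 2 * c) - 2 * (R * r) * (1 + 2 * c + 2 * c ^ 2) := by
    have hgap : 0 < R * r * ((1 - c) * (2 + 6 * c)) :=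
      mul_pos hRr (mul_pos (by linarith) (by linarith))
    nlinarith [mul_le_mul_of_nonneg_right hratio (show 0 ≤ 1 + 2 * c by linarith)]
  -- The difference of the two sides is `1 - c` times the quantity in `hfactor`.
  linear_combination mul_pos (sub_pos.2 hc₁) hfactor

theorem angle_neg_lt_two_mul_angle {p a q : V} (hp : 3 * ‖a‖ ≤ ‖p‖) (hpa : 0 < angle p a)
    (hq : ‖q‖ = ‖a‖) (hcol : Collinear ℝ {p, a, q}) (hqa : q ≠ a) :
    angle q (-p) < 2 * angle p a := by
  rcases le_or_gt (angle p a) (π / 2) with hacute | hobtuse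
  · have ha : a ≠ 0 := by
      rintro rfl
      exact hqa (by simpa using hq)
    have ha_pos : 0 < ‖a‖ := norm_pos_iff.2 ha
    have hp_ne : p ≠ 0 := norm_pos_iff.1 (by linarith)
    have hpa_ne : p ≠ a := by
      rintro rfl
      linarith
    have hdist : 0 < ‖p - a‖ ^ 2 := by
      have := norm_pos_iff.2 (sub_ne_zero.2 hpa_ne)
      positivity
    have hcos_nonneg : 0 ≤ cos (angle p a) := cos_nonneg_of_mem_Icc ⟨by linarith [pi_pos], hacute⟩
    have hcos_lt_one : cos (angle p a) < 1 :=
      (cos_le_one _).lt_of_ne (mt cos_eq_one_iff_angle_eq_zero.1 hpa.ne')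
    have hlaw : ‖p - a‖ ^ 2 = ‖p‖ ^ 2 - 2 * (‖p‖ * ‖a‖ * cos (angle p a)) + ‖a‖ ^ 2 := by
      rw [norm_sub_sq_real, ← cos_angle_mul_norm_mul_norm]
      ring
    have hcos : cos (2 * angle p a) < cos (angle q (-p)) := by
      refine lt_of_mul_lt_mul_right ?_ hdist.le
      rw [cos_angle_neg_mul_norm_sub_sq ha hp_ne hpa_ne hq hcol hqa, cos_two_mul, hlaw]
      exact two_mul_sq_sub_one_mul_lt ha_pos hp (by linarith) hcos_lt_one
    exact (strictAntiOn_cos.lt_iff_gt ⟨by linarith, by linarith⟩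
      ⟨angle_nonneg _ _, angle_le_pi _ _⟩).1 hcos
  · linarith [angle_le_pi q (-p)]

theorem second_intersections_angle_bound_general {p p₁ p₂ q₁ q₂ : V} {r θ : ℝ}
    (hθ : 0 < θ) (hp : 3 * r ≤ ‖p‖) (hp₁ : ‖p₁‖ = r) (hp₂ : ‖p₂‖ = r)
    (hθ₁ : ∠ p 0 p₁ = θ) (hθ₂ : ∠ p 0 p₂ = θ) (hq₁ : ‖q₁‖ = r) (hq₂ : ‖q₂‖ = r)
    (hcol₁ : Collinear ℝ {p, p₁, q₁}) (hne₁ : q₁ ≠ p₁)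
    (hcol₂ : Collinear ℝ {p, p₂, q₂}) (hne₂ : q₂ ≠ p₂) :
    ∠ q₁ 0 q₂ < 4 * θ := by
  simp only [EuclideanGeometry.angle, vsub_eq_sub, sub_zero] at *
  have h₁ : angle q₁ (-p) < 2 * θ := hθ₁ ▸ angle_neg_lt_two_mul_angle
    (hp₁ ▸ hp) (hθ₁ ▸ hθ) (hq₁.trans hp₁.symm) hcol₁ hne₁
  have h₂ : angle q₂ (-p) < 2 * θ := hθ₂ ▸ angle_neg_lt_two_mul_angle
    (hp₂ ▸ hp) (hθ₂ ▸ hθ) (hq₂.trans hp₂.symm) hcol₂ hne₂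
  calc
    angle q₁ q₂ ≤ angle q₁ (-p) + angle (-p) q₂ := angle_le_angle_add_angle _ _ _
    _ < 4 * θ := by
      rw [angle_comm (-p)]
      linarith

end Secant

section Plane

open scoped EuclideanGeometry RealInnerProductSpace

lemma angle_vertical (v : EuclideanSpace ℝ (Fin 2)) {R : ℝ} (hR : 0 < R) :
    ∠ !₂[0, R] 0 v = arccos (v 1 / ‖v‖) := by
  have hnorm : ‖!₂[0, R]‖ = R := by simp [EuclideanSpace.norm_eq, sqrt_sq hR.le]
  have hinner : ⟪!₂[0, R], v⟫ = R * v 1 := by simp [PiLp.inner_apply, mul_comm]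
  rw [EuclideanGeometry.angle, vsub_eq_sub, vsub_eq_sub, sub_zero, sub_zero,
    InnerProductGeometry.angle, hinner, hnorm, mul_div_mul_left _ _ hR.ne']

lemma angle_vertical_of_norm_eq_one {R x θ : ℝ} (hR : 0 < R) (hθ₀ : 0 ≤ θ) (hθ : θ ≤ π)
    (hnorm : ‖!₂[x, cos θ]‖ = 1) : ∠ !₂[0, R] 0 !₂[x, cos θ] = θ := by
  rw [angle_vertical _ hR, hnorm, div_one]
  exact arccos_cos hθ₀ hθ

end Plane

theorem second_intersections_angle_bound
    (n : ℕ) (hn : 7 ≤ n)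
    (p p₁ p₂ q₁ q₂ : EuclideanSpace ℝ (Fin 2))
    (hp : p = (WithLp.equiv 2 (Fin 2 → ℝ)).symm ![0, 4])
    (hp₁ : p₁ = (WithLp.equiv 2 (Fin 2 → ℝ)).symm ![sin (π / n), cos (π / n)])
    (hp₂ : p₂ = (WithLp.equiv 2 (Fin 2 → ℝ)).symm ![-sin (π / n), cos (π / n)])
    (hq₁ : ‖q₁‖ = 1) (hq₂ : ‖q₂‖ = 1)
    (hcol₁ : Collinear ℝ ({p, p₁, q₁} : Set (EuclideanSpace ℝ (Fin 2))))
    (hne₁ : q₁ ≠ p₁)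
    (hcol₂ : Collinear ℝ ({p, p₂, q₂} : Set (EuclideanSpace ℝ (Fin 2))))
    (hne₂ : q₂ ≠ p₂) :
    EuclideanGeometry.angle q₁ (0 : EuclideanSpace ℝ (Fin 2)) q₂ < 4 * π / n := by
  subst hp hp₁ hp₂
  have hθ : 0 < π / n := by positivity
  have hθ_le : π / n ≤ π := div_le_self pi_nonneg (by exact_mod_cast (by lia : 1 ≤ n))
  have hnorm₁ : ‖!₂[sin (π / n), cos (π / n)]‖ = 1 := by simp [EuclideanSpace.norm_eq]
  have hnorm₂ : ‖!₂[-sin (π / n), cos (π / n)]‖ = 1 := by simp [EuclideanSpace.norm_eq]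
  rw [mul_div_assoc]
  exact second_intersections_angle_bound_general hθ (by norm_num [EuclideanSpace.norm_eq])
    hnorm₁ hnorm₂ (angle_vertical_of_norm_eq_one four_pos hθ.le hθ_le hnorm₁)
    (angle_vertical_of_norm_eq_one four_pos hθ.le hθ_le hnorm₂) hq₁ hq₂ hcol₁ hne₁ hcol₂ hne₂
end
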